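/- For n ≥ 1 define A_n : ℝ → ℝ by A_n(t) := Σ_{j=1}^n 2·(−1)^{j+1}·C(n+j−1, n−j)·((2j−1)!/((j−1)!·(j+1)!))·e^{−jt}. Then: (i) A_1(t) = e^{−t} for all t; (ii) A_n(0) = 0 for every n ≥ 2; and (iii) for every n ≥ 2 and every t ∈ ℝ, Ȧ_{n−1}(t) + Ȧ_n(t) = (n−1)·A_{n−1}(t) − n·A_n(t). -/

import Mathlib

open Finset

/-- The coefficient `a(n,j) = 2(-1)^{j+1} C(n+j-1, n-j) (2j-1)!/((j-1)!(j+1)!)`. -/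
noncomputable def koebeCoef (n j : ℕ) : ℝ :=
  2 * (-1 : ℝ) ^ (j + 1) * (Nat.choose (n + j - 1) (n - j)) *
    ((Nat.factorial (2 * j - 1) : ℝ) /
      ((Nat.factorial (j - 1) : ℝ) * (Nat.factorial (j + 1) : ℝ)))

/-- The coefficient function `A_n(t) = ∑_{j=1}^n a(n,j) e^{-jt}` of the Löwner chain
of the Koebe function. -/
noncomputable def koebeA (n : ℕ) (t : ℝ) : ℝ :=
  ∑ j ∈ Icc 1 n, koebeCoef n j * Real.exp (-(j : ℝ) * t)

theorem koebeCoef_closed (i k : ℕ) :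
    koebeCoef (i + 1 + k) (i + 1) = 2 * (-1 : ℝ) ^ i * (Nat.factorial (k + (2 * i + 1)) : ℝ) /
      ((Nat.factorial k : ℝ) * (Nat.factorial i : ℝ) * (Nat.factorial (i + 2) : ℝ)) := by
  unfold koebeCoef
  have h1 : i + 1 + k + (i + 1) - 1 = k + (2 * i + 1) := by omega
  have h2 : i + 1 + k - (i + 1) = k := by omega
  have h3 : 2 * (i + 1) - 1 = 2 * i + 1 := by omega
  have h4 : i + 1 - 1 = i := by omega
  have h5 : i + 1 + 1 = i + 2 := by omega
  rw [h1, h2, h3, h4, h5, Nat.cast_add_choose]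
  have e1 : (Nat.factorial k : ℝ) ≠ 0 := by positivity
  have e2 : (Nat.factorial i : ℝ) ≠ 0 := by positivity
  have e3 : (Nat.factorial (i + 2) : ℝ) ≠ 0 := by positivity
  have e4 : (Nat.factorial (2 * i + 1) : ℝ) ≠ 0 := by positivity
  field_simp
  ring

theorem koebeCoef_rec_n (n j : ℕ) (h1 : 1 ≤ j) (h : j ≤ n) :
    ((n : ℝ) + 1 - j) * koebeCoef (n + 1) j = ((n : ℝ) + j) * koebeCoef n j := by
  obtain ⟨i, rfl⟩ := Nat.exists_eq_add_of_le' h1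
  obtain ⟨k, rfl⟩ := Nat.exists_eq_add_of_le h
  rw [show i + 1 + k + 1 = i + 1 + (k + 1) by ring, koebeCoef_closed, koebeCoef_closed,
    show k + 1 + (2 * i + 1) = (k + (2 * i + 1)) + 1 by ring,
    Nat.factorial_succ (k + (2 * i + 1)), Nat.factorial_succ k]
  have e1 : (Nat.factorial k : ℝ) ≠ 0 := by positivity
  have e2 : (Nat.factorial i : ℝ) ≠ 0 := by positivity
  have e3 : (Nat.factorial (i + 2) : ℝ) ≠ 0 := by positivity
  have e4 : (k : ℝ) + 1 ≠ 0 := by positivity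
  push_cast
  field_simp
  ring

theorem koebeCoef_rec_j (n j : ℕ) (h1 : 1 ≤ j) (h : j + 1 ≤ n) :
    ((j : ℝ) * (j + 2)) * koebeCoef n (j + 1) = -((n : ℝ) ^ 2 - (j : ℝ) ^ 2) * koebeCoef n j := by
  obtain ⟨i, rfl⟩ := Nat.exists_eq_add_of_le' h1
  obtain ⟨k, rfl⟩ := Nat.exists_eq_add_of_le h
  rw [koebeCoef_closed (i + 1) k, show i + 1 + 1 + k = i + 1 + (k + 1) by ring,
    koebeCoef_closed i (k + 1),
    show k + (2 * (i + 1) + 1) = (k + 1 + (2 * i + 1)) + 1 by ring,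
    Nat.factorial_succ (k + 1 + (2 * i + 1)), Nat.factorial_succ k,
    Nat.factorial_succ i, show i + 1 + 2 = (i + 2) + 1 by ring, Nat.factorial_succ (i + 2)]
  have e1 : (Nat.factorial k : ℝ) ≠ 0 := by positivity
  have e2 : (Nat.factorial i : ℝ) ≠ 0 := by positivity
  have e3 : (Nat.factorial (i + 2) : ℝ) ≠ 0 := by positivity
  have e4 : (k : ℝ) + 1 ≠ 0 := by positivity
  have e5 : (i : ℝ) + 1 ≠ 0 := by positivity
  have e6 : (i : ℝ) + 2 + 1 ≠ 0 := by positivity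
  push_cast
  field_simp
  ring

theorem koebeCoef_partial (n m : ℕ) (h1 : 1 ≤ m) (h : m ≤ n) :
    ((n : ℝ) ^ 2 - 1) * ∑ j ∈ Icc 1 m, koebeCoef n j =
      ((n : ℝ) ^ 2 - (m : ℝ) ^ 2) * koebeCoef n m := by
  induction m, h1 using Nat.le_induction with
  | base => simp
  | succ m hm ih =>
    rw [Finset.sum_Icc_succ_top (by omega), mul_add, ih (by omega)]
    have := koebeCoef_rec_j n m hm h
    push_cast
    linarith

theorem koebeA_hasDerivAt (n : ℕ) (t : ℝ) :
    HasDerivAt (koebeA n)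
      (∑ j ∈ Icc 1 n, koebeCoef n j * (Real.exp (-(j : ℝ) * t) * (-(j : ℝ)))) t := by
  unfold koebeA
  apply HasDerivAt.fun_sum
  intro j _
  apply HasDerivAt.const_mul
  have := ((hasDerivAt_id t).const_mul (-(j : ℝ))).exp
  simpa using this

/-- The functions `A_n` satisfy `A_1(t) = e^{-t}`, `A_n(0) = 0` for `n ≥ 2`, and the
differential equations system
`Ȧ_{n-1}(t) + Ȧ_n(t) = (n-1)A_{n-1}(t) - n·A_n(t)` for `n ≥ 2`. -/
theorem koebeA_satisfies_system :
    (∀ t : ℝ, koebeA 1 t = Real.exp (-t)) ∧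
    (∀ n : ℕ, 2 ≤ n → koebeA n 0 = 0) ∧
    (∀ n : ℕ, 2 ≤ n → ∀ t : ℝ,
      deriv (koebeA (n - 1)) t + deriv (koebeA n) t =
        ((n : ℝ) - 1) * koebeA (n - 1) t - (n : ℝ) * koebeA n t) := by
  refine ⟨?_, ?_, ?_⟩
  · intro t
    simp [koebeA, koebeCoef]
  · intro n hn
    have h := koebeCoef_partial n n (by omega) le_rfl
    rw [sub_self, zero_mul] at h
    have hn' : (2 : ℝ) ≤ n := by exact_mod_cast hn
    have h2 : ((n : ℝ) ^ 2 - 1) ≠ 0 := by nlinarith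
    simpa [koebeA] using (mul_eq_zero.mp h).resolve_left h2
  · intro n hn t
    obtain ⟨m, rfl⟩ := Nat.exists_eq_add_of_le' (show 1 ≤ n by omega)
    rw [Nat.add_sub_cancel, (koebeA_hasDerivAt m t).deriv, (koebeA_hasDerivAt (m + 1) t).deriv]
    unfold koebeA
    rw [Finset.sum_Icc_succ_top (by omega), Finset.sum_Icc_succ_top (by omega)]
    have key : ∑ j ∈ Icc 1 m, koebeCoef m j * (Real.exp (-(j : ℝ) * t) * (-(j : ℝ))) +
        ∑ j ∈ Icc 1 m, koebeCoef (m + 1) j * (Real.exp (-(j : ℝ) * t) * (-(j : ℝ))) =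
        (m : ℝ) * ∑ j ∈ Icc 1 m, koebeCoef m j * Real.exp (-(j : ℝ) * t) -
        ((m : ℝ) + 1) * ∑ j ∈ Icc 1 m, koebeCoef (m + 1) j * Real.exp (-(j : ℝ) * t) := by
      rw [Finset.mul_sum, Finset.mul_sum, ← Finset.sum_add_distrib, ← Finset.sum_sub_distrib]
      refine Finset.sum_congr rfl fun j hj => ?_
      rw [Finset.mem_Icc] at hj
      have := koebeCoef_rec_n m j hj.1 hj.2
      linear_combination Real.exp (-(j : ℝ) * t) * this
    push_cast
    linear_combination key
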